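/- Every ζ ∈ ℂ with F_0(ζ) = 0 satisfies Re ζ > 0 and Im ζ ≠ 0; moreover at every such zero the derivative satisfies F_0'(ζ) = −1/(√π·ζ), which is nonzero, so every zero of F_0 is simple. -/

import Mathlib

/-!
For `Re u > 0` one has `F_0(−u) = 1/√π − u e^{u²} erfc u`, with `erfc = 1 − erf`. Shifting the
contour (`integral_exp_laplace`) writes `e^{u²} erfc u` as `(2/√π) ∫_0^∞ e^{−s²−2us} ds`, and
inserting the Fourier representation of `e^{−s²}` (`laplace_eq_cauchy`) turns this into the Cauchy
transform `(1/π) ∫ e^{−t²}/(u − it) dt` over the real line. Since `t²/(u − it) = u + it − u²/(u − it)`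
and the Gaussian has mass `√π` and mean zero, `π F_0(−u) = u⁻¹ ∫ t² e^{−t²}/(u − it) dt`. The
last integral has positive real part, because `Re 1/(u − it) > 0`; so there is no zero with
negative real part (`F0_neg_ne_zero`).

On the imaginary axis `Im F_0(iy) = y e^{−y²}` and `F_0(0) = 1/√π`; on the positive real axis
`F_0 > 0`. Finally the derivative of `F_0` is `(2ζ² + 1) e^{ζ²} (1 + erf ζ) + 2ζ/√π`, which at a zero, where
`e^{ζ²} (1 + erf ζ) = −1/(√π ζ)`, collapses to `−1/(√π ζ)`.
-/


open Real

/-- The error function `erf ζ = (2/√π) ∫_0^1 ζ e^{−ζ²t²} dt`. -/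
noncomputable def cerf (z : ℂ) : ℂ :=
  ((2 / Real.sqrt π : ℝ) : ℂ) * ∫ t in (0 : ℝ)..1, z * Complex.exp (-z ^ 2 * (t : ℂ) ^ 2)

/-- The entire function `F_0(ζ) = e^{ζ²} ζ (1 + erf ζ) + 1/√π`. -/
noncomputable def F0 (z : ℂ) : ℂ :=
  Complex.exp (z ^ 2) * z * (1 + cerf z) + ((1 / Real.sqrt π : ℝ) : ℂ)

open MeasureTheory Filter Topology

/-! ### The error function through an antiderivative of the Gaussian -/

/-- Up to normalisation, `erf`: an antiderivative of the entire function `e^{−z²}` vanishing at `0`. -/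
lemma exists_gaussian_primitive :
    ∃ P : ℂ → ℂ, P 0 = 0 ∧ ∀ z, HasDerivAt P (Complex.exp (-z ^ 2)) z := by
  have hd : Differentiable ℂ fun z : ℂ => Complex.exp (-z ^ 2) := by fun_prop
  obtain ⟨P, h0, hP⟩ := hd.isExactOn_univ.with_val_at 0 0
  exact ⟨P, h0, fun z => hP z (Set.mem_univ z)⟩

lemma gaussian_primitive_add_sub {P : ℂ → ℂ} (hP : ∀ z, HasDerivAt P (Complex.exp (-z ^ 2)) z)
    (w u : ℂ) :
    ∫ t in (0 : ℝ)..1, u * Complex.exp (-(w + t * u) ^ 2) = P (w + u) - P w := by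
  have hder : ∀ t : ℝ,
      HasDerivAt (fun t : ℝ => P (w + t * u)) (u * Complex.exp (-(w + t * u) ^ 2)) t := by
    intro t
    have h1 : HasDerivAt (fun t : ℝ => w + t * u) u t := by
      simpa using ((Complex.ofRealCLM.hasDerivAt (x := t)).mul_const u).const_add w
    have := (hP (w + t * u)).comp t h1
    rwa [mul_comm] at this
  rw [intervalIntegral.integral_eq_sub_of_hasDerivAt (f := fun t : ℝ => P (w + t * u))
    (fun t _ => hder t)]
  · simp
  · exact Continuous.intervalIntegrable (by fun_prop) _ _

lemma cerf_eq {P : ℂ → ℂ} (h0 : P 0 = 0) (hP : ∀ z, HasDerivAt P (Complex.exp (-z ^ 2)) z) (z : ℂ) :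
    cerf z = ((2 / Real.sqrt π : ℝ) : ℂ) * P z := by
  have h := gaussian_primitive_add_sub hP 0 z
  rw [zero_add, h0, sub_zero] at h
  rw [cerf, ← h]
  congr 1
  refine intervalIntegral.integral_congr fun t _ => ?_
  congr 2
  ring

lemma cerf_neg (z : ℂ) : cerf (-z) = -cerf z := by
  simp [cerf]

lemma hasDerivAt_cerf (z : ℂ) :
    HasDerivAt cerf (((2 / Real.sqrt π : ℝ) : ℂ) * Complex.exp (-z ^ 2)) z := by
  obtain ⟨P, h0, hP⟩ := exists_gaussian_primitive
  rw [funext (cerf_eq h0 hP)]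
  exact (hP z).const_mul _

/-! ### Gaussian integrals -/

lemma sqrt_pi_ne_zero : ((Real.sqrt π : ℝ) : ℂ) ≠ 0 := by
  exact_mod_cast (Real.sqrt_pos.mpr Real.pi_pos).ne'

lemma sqrt_pi_mul_self : ((Real.sqrt π : ℝ) : ℂ) * ((Real.sqrt π : ℝ) : ℂ) = π := by
  exact_mod_cast Real.mul_self_sqrt Real.pi_pos.le

lemma integrable_cexp_neg_sq : Integrable fun t : ℝ => Complex.exp (-(t : ℂ) ^ 2) := by
  simpa using integrable_cexp_neg_mul_sq (b := 1) (by simp)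

lemma integral_cexp_neg_sq :
    ∫ t : ℝ, Complex.exp (-(t : ℂ) ^ 2) = ((Real.sqrt π : ℝ) : ℂ) := by
  have h := integral_gaussian 1
  rw [div_one] at h
  rw [← h, ← integral_complex_ofReal]
  simp

lemma integral_cexp_neg_sq_Ioi :
    ∫ t in Set.Ioi (0 : ℝ), Complex.exp (-(t : ℂ) ^ 2) = ((Real.sqrt π : ℝ) : ℂ) / 2 := by
  have h := integral_gaussian_Ioi 1
  rw [div_one] at h
  have h2 : ((Real.sqrt π : ℝ) : ℂ) / 2 = ((Real.sqrt π / 2 : ℝ) : ℂ) := by push_cast; rfl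
  rw [h2, ← h, ← integral_complex_ofReal]
  simp

/-! ### Integral representations of `e^{u²} erfc u` -/

/-- The antiderivative tends to `√π / 2` along every horizontal half-line in the right
half-plane: on the segment from `S` to `S + u` the integrand is `O(e^{−S²})`. -/
lemma tendsto_gaussian_primitive {P : ℂ → ℂ} (h0 : P 0 = 0)
    (hP : ∀ z, HasDerivAt P (Complex.exp (-z ^ 2)) z) {u : ℂ} (hu : 0 < u.re) :
    Tendsto (fun S : ℝ => P (S + u)) atTop (𝓝 (((Real.sqrt π : ℝ) : ℂ) / 2)) := by
  have h1 : Tendsto (fun S : ℝ => P S) atTop (𝓝 (((Real.sqrt π : ℝ) : ℂ) / 2)) := by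
    rw [← integral_cexp_neg_sq_Ioi]
    have h := intervalIntegral_tendsto_integral_Ioi (0 : ℝ)
      (integrable_cexp_neg_sq.integrableOn) tendsto_id
    refine h.congr fun S => ?_
    rw [intervalIntegral.integral_eq_sub_of_hasDerivAt (f := fun t : ℝ => P t)
      (fun t _ => (hP t).comp_ofReal)]
    · simp [h0]
    · exact Continuous.intervalIntegrable (by fun_prop) _ _
  have h2 : Tendsto (fun S : ℝ => P (S + u) - P S) atTop (𝓝 0) := by
    have hb : Tendsto (fun S : ℝ => ‖u‖ * Real.exp (‖u‖ ^ 2) * Real.exp (-S)) atTop (𝓝 0) := by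
      simpa using Real.tendsto_exp_neg_atTop_nhds_zero.const_mul (‖u‖ * Real.exp (‖u‖ ^ 2))
    refine squeeze_zero_norm' ?_ hb
    filter_upwards [eventually_ge_atTop 1] with S hS
    rw [← gaussian_primitive_add_sub hP]
    have := intervalIntegral.norm_integral_le_of_norm_le_const (a := (0 : ℝ)) (b := 1)
      (f := fun t : ℝ => u * Complex.exp (-((S : ℂ) + t * u) ^ 2))
      (C := ‖u‖ * Real.exp (‖u‖ ^ 2) * Real.exp (-S)) ?_
    · simpa using this
    · intro t ht
      rw [Set.uIoc_of_le zero_le_one] at ht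
      obtain ⟨ht0, ht1⟩ := ht
      rw [norm_mul, Complex.norm_exp, mul_assoc, ← Real.exp_add]
      gcongr
      have hn : ‖u‖ ^ 2 = u.re ^ 2 + u.im ^ 2 := by
        rw [← Complex.normSq_eq_norm_sq, Complex.normSq_apply]; ring
      have hre : (-((S : ℂ) + t * u) ^ 2).re
          = -S ^ 2 - 2 * S * t * u.re - t ^ 2 * u.re ^ 2 + t ^ 2 * u.im ^ 2 := by
        simp [pow_two]; ring
      rw [hn, hre]
      have e1 : 0 ≤ 2 * S * t * u.re := by positivity
      have e2 : t ^ 2 * u.im ^ 2 ≤ u.im ^ 2 :=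
        mul_le_of_le_one_left (sq_nonneg _) (by nlinarith)
      nlinarith [sq_nonneg (t * u.re), sq_nonneg u.re]
  simpa using h2.add h1

/-- `(√π / 2) e^{u²} erfc u` as a Laplace transform. -/
lemma integral_exp_laplace {u : ℂ} (hu : 0 < u.re) :
    ∫ s in Set.Ioi (0 : ℝ), Complex.exp (-(s : ℂ) ^ 2 - 2 * u * s)
      = ((Real.sqrt π : ℝ) : ℂ) / 2 * (Complex.exp (u ^ 2) * (1 - cerf u)) := by
  obtain ⟨P, h0, hP⟩ := exists_gaussian_primitive
  have hi : Integrable fun s : ℝ => Complex.exp (-((s : ℂ) + u) ^ 2) := by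
    convert integrable_cexp_quadratic (b := 1) (by simp) (-2 * u) (-u ^ 2) using 3
    ring
  have hder : ∀ s : ℝ,
      HasDerivAt (fun s : ℝ => P (s + u)) (Complex.exp (-((s : ℂ) + u) ^ 2)) s := by
    intro s
    have h1 : HasDerivAt (fun s : ℝ => (s : ℂ) + u) 1 s := by
      simpa using (Complex.ofRealCLM.hasDerivAt (x := s)).add_const u
    have := (hP (s + u)).comp s h1
    rwa [mul_one] at this
  have key := integral_Ioi_of_hasDerivAt_of_tendsto' (a := 0) (fun s _ => hder s) hi.integrableOn
    (tendsto_gaussian_primitive h0 hP hu)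
  have h2 : ∀ s : ℝ, Complex.exp (-(s : ℂ) ^ 2 - 2 * u * s)
      = Complex.exp (u ^ 2) * Complex.exp (-((s : ℂ) + u) ^ 2) := by
    intro s
    rw [← Complex.exp_add]
    congr 1
    ring
  simp_rw [h2]
  rw [integral_const_mul, key, cerf_eq h0 hP]
  have := sqrt_pi_ne_zero
  push_cast
  field_simp
  simp

lemma re_sub_I_mul (u : ℂ) (t : ℝ) : (u - Complex.I * t).re = u.re := by simp

lemma sub_I_mul_ne_zero {u : ℂ} (hu : 0 < u.re) (t : ℝ) : u - Complex.I * t ≠ 0 := by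
  intro h
  have := re_sub_I_mul u t
  rw [h] at this
  simp at this
  linarith

/-- The Laplace transform above as a Cauchy transform of the Gaussian, obtained by writing
`√π e^{−s²} = ∫ e^{−t²} e^{2ist} dt` and exchanging the integrals. -/
lemma laplace_eq_cauchy {u : ℂ} (hu : 0 < u.re) :
    ((Real.sqrt π : ℝ) : ℂ) * ∫ s in Set.Ioi (0 : ℝ), Complex.exp (-(s : ℂ) ^ 2 - 2 * u * s)
      = (∫ t : ℝ, Complex.exp (-(t : ℂ) ^ 2) / (u - Complex.I * t)) / 2 := by
  have hint : Integrable (Function.uncurry fun (t s : ℝ) => Complex.exp (2 * s * t * Complex.I) *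
      (Complex.exp (-(t : ℂ) ^ 2) * Complex.exp (-2 * u * s)))
      (volume.prod (volume.restrict (Set.Ioi (0 : ℝ)))) := by
    refine Integrable.bdd_mul (c := 1)
      (integrable_cexp_neg_sq.mul_prod (integrableOn_exp_mul_complex_Ioi (by simpa using hu) 0))
      (Continuous.aestronglyMeasurable (by fun_prop)) (Eventually.of_forall fun z => ?_)
    rw [Complex.norm_exp]
    simp
  have hswap := integral_integral_swap hint
  have hl : ∀ t : ℝ, ∫ s in Set.Ioi (0 : ℝ), Complex.exp (2 * s * t * Complex.I) *
      (Complex.exp (-(t : ℂ) ^ 2) * Complex.exp (-2 * u * s))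
      = Complex.exp (-(t : ℂ) ^ 2) / (u - Complex.I * t) / 2 := by
    intro t
    have ha : (-2 * (u - Complex.I * t)).re < 0 := by simpa using hu
    have h1 : ∀ s : ℝ, Complex.exp (2 * s * t * Complex.I) *
        (Complex.exp (-(t : ℂ) ^ 2) * Complex.exp (-2 * u * s))
        = Complex.exp (-(t : ℂ) ^ 2) * Complex.exp (-2 * (u - Complex.I * t) * s) := by
      intro s
      simp only [← Complex.exp_add]
      congr 1
      ring
    simp_rw [h1]
    rw [integral_const_mul, integral_exp_mul_complex_Ioi ha]
    have := sub_I_mul_ne_zero hu t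
    simp
    field_simp
  have hr : ∀ s : ℝ, ∫ t : ℝ, Complex.exp (2 * s * t * Complex.I) *
      (Complex.exp (-(t : ℂ) ^ 2) * Complex.exp (-2 * u * s))
      = ((Real.sqrt π : ℝ) : ℂ) * Complex.exp (-(s : ℂ) ^ 2 - 2 * u * s) := by
    intro s
    have h1 : ∀ t : ℝ, Complex.exp (2 * s * t * Complex.I) *
        (Complex.exp (-(t : ℂ) ^ 2) * Complex.exp (-2 * u * s))
        = Complex.exp (-2 * u * s) *
          (Complex.exp (Complex.I * (2 * s) * t) * Complex.exp (-1 * (t : ℂ) ^ 2)) := by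
      intro t
      simp only [← Complex.exp_add]
      congr 1
      ring
    simp_rw [h1]
    have hpi : ((π : ℂ) / 1) ^ (1 / 2 : ℂ) = ((Real.sqrt π : ℝ) : ℂ) := by
      rw [Real.sqrt_eq_rpow, Complex.ofReal_cpow Real.pi_pos.le]
      simp
    rw [integral_const_mul, fourierIntegral_gaussian (by simp), hpi, mul_left_comm,
      ← Complex.exp_add]
    congr 2
    ring
  simp_rw [hl, hr] at hswap
  rw [integral_const_mul, integral_div] at hswap
  exact hswap.symm

/-! ### Zero-free regions of `F_0` -/

/-- `F_0` has no zero in the open left half-plane. A zero at `−u` forces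
`∫ t² e^{−t²}/(u − it) dt = 0`, whereas `1/(u − it)` has positive real part. -/
lemma F0_neg_ne_zero {u : ℂ} (hu : 0 < u.re) : F0 (-u) ≠ 0 := by
  intro hF
  have hC := laplace_eq_cauchy hu
  rw [integral_exp_laplace hu] at hC
  have hne := sqrt_pi_ne_zero
  have hden := sub_I_mul_ne_zero hu
  have hbound : ∀ t : ℝ, ‖(u - Complex.I * t)⁻¹‖ ≤ u.re⁻¹ := by
    intro t
    rw [norm_inv]
    gcongr
    rw [← re_sub_I_mul u t]
    exact Complex.re_le_norm _
  have hmeas : AEStronglyMeasurable (fun t : ℝ => (u - Complex.I * t)⁻¹) volume :=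
    (Continuous.inv₀ (by fun_prop) hden).aestronglyMeasurable
  -- `F_0(−u) = 0` says `√π u e^{u²} (1 − erf u) = 1`; the transform identities restate it.
  have huC : u * ∫ t : ℝ, Complex.exp (-(t : ℂ) ^ 2) / (u - Complex.I * t)
      = ((Real.sqrt π : ℝ) : ℂ) := by
    rw [F0, cerf_neg] at hF
    have h2 : u * (Complex.exp (u ^ 2) * (1 - cerf u)) = 1 / ((Real.sqrt π : ℝ) : ℂ) := by
      push_cast at hF
      rw [neg_sq] at hF
      linear_combination -hF
    have h3 : ∫ t : ℝ, Complex.exp (-(t : ℂ) ^ 2) / (u - Complex.I * t)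
        = ((Real.sqrt π : ℝ) : ℂ) * ((Real.sqrt π : ℝ) : ℂ)
          * (Complex.exp (u ^ 2) * (1 - cerf u)) := by
      linear_combination -2 * hC
    rw [h3, mul_left_comm, h2]
    field_simp
  have hi0 : Integrable fun t : ℝ => Complex.exp (-(t : ℂ) ^ 2) / (u - Complex.I * t) := by
    have := integrable_cexp_neg_sq.bdd_mul hmeas (Eventually.of_forall hbound)
    refine this.congr (Eventually.of_forall fun t => ?_)
    simp only [div_eq_inv_mul]
  have hi1 : Integrable fun t : ℝ => (t : ℂ) * Complex.exp (-(t : ℂ) ^ 2) := by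
    simpa using integrable_mul_cexp_neg_mul_sq (b := 1) (by simp)
  have hodd : ∫ t : ℝ, (t : ℂ) * Complex.exp (-(t : ℂ) ^ 2) = 0 := by
    have h := integral_neg_eq_self (fun t : ℝ => (t : ℂ) * Complex.exp (-(t : ℂ) ^ 2)) volume
    simp only [Complex.ofReal_neg, neg_sq, neg_mul, integral_neg] at h
    exact CharZero.eq_neg_self_iff.mp h.symm
  -- `t² = (u + it)(u − it) − u²`, so the second moment reduces to the transform itself.
  have hdecomp : ∀ t : ℝ, (t : ℂ) ^ 2 * Complex.exp (-(t : ℂ) ^ 2) / (u - Complex.I * t)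
      = u * Complex.exp (-(t : ℂ) ^ 2) + Complex.I * ((t : ℂ) * Complex.exp (-(t : ℂ) ^ 2))
        - u ^ 2 * (Complex.exp (-(t : ℂ) ^ 2) / (u - Complex.I * t)) := by
    intro t
    rw [div_eq_iff (hden t), sub_mul, mul_assoc (u ^ 2), div_mul_cancel₀ _ (hden t)]
    linear_combination ((t : ℂ) ^ 2 * Complex.exp (-(t : ℂ) ^ 2)) * Complex.I_sq
  have hia : Integrable fun t : ℝ => u * Complex.exp (-(t : ℂ) ^ 2)
      + Complex.I * ((t : ℂ) * Complex.exp (-(t : ℂ) ^ 2)) :=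
    (integrable_cexp_neg_sq.const_mul u).add (hi1.const_mul _)
  have hi2 : Integrable fun t : ℝ =>
      (t : ℂ) ^ 2 * Complex.exp (-(t : ℂ) ^ 2) / (u - Complex.I * t) := by
    simp_rw [hdecomp]
    exact hia.sub (hi0.const_mul _)
  have hzero : ∫ t : ℝ, (t : ℂ) ^ 2 * Complex.exp (-(t : ℂ) ^ 2) / (u - Complex.I * t) = 0 := by
    simp_rw [hdecomp]
    rw [integral_sub hia (hi0.const_mul _),
      integral_add (integrable_cexp_neg_sq.const_mul u) (hi1.const_mul _)]
    simp only [integral_const_mul]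
    rw [hodd, integral_cexp_neg_sq]
    linear_combination -u * huC
  have hre : ∀ t : ℝ, ((t : ℂ) ^ 2 * Complex.exp (-(t : ℂ) ^ 2) / (u - Complex.I * t)).re
      = t ^ 2 * Real.exp (-t ^ 2) * (u.re / Complex.normSq (u - Complex.I * t)) := by
    intro t
    have : (t : ℂ) ^ 2 * Complex.exp (-(t : ℂ) ^ 2) = ((t ^ 2 * Real.exp (-t ^ 2) : ℝ) : ℂ) := by
      push_cast; rfl
    rw [this, div_eq_mul_inv, Complex.re_ofReal_mul, Complex.inv_re, re_sub_I_mul]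
  have hpos : 0 < ∫ t : ℝ,
      ((t : ℂ) ^ 2 * Complex.exp (-(t : ℂ) ^ 2) / (u - Complex.I * t)).re := by
    have hnsq : ∀ t : ℝ, 0 < Complex.normSq (u - Complex.I * t) := fun t =>
      Complex.normSq_pos.mpr (hden t)
    refine integral_pos_of_integrable_nonneg_nonzero (x := 1) ?_ hi2.re (fun t => ?_) ?_
    · exact Complex.continuous_re.comp (Continuous.div (by fun_prop) (by fun_prop) hden)
    · have := hnsq t
      rw [hre]
      positivity
    · have := hnsq 1
      rw [hre]
      positivity
  have hsw : ∫ t : ℝ, ((t : ℂ) ^ 2 * Complex.exp (-(t : ℂ) ^ 2) / (u - Complex.I * t)).re = 0 := by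
    have := integral_re hi2
    simp only [RCLike.re_to_complex] at this
    rw [this, hzero]
    simp
  exact hpos.ne' hsw

/-- On the imaginary axis `erf` is imaginary, so `Im F_0(iy) = y e^{−y²}`. -/
lemma F0_ne_zero_of_re_eq_zero {z : ℂ} (hz : z.re = 0) : F0 z ≠ 0 := by
  intro hF
  obtain ⟨y, rfl⟩ : ∃ y : ℝ, z = y * Complex.I := ⟨z.im, Complex.ext (by simp [hz]) (by simp)⟩
  have hsq : ((y : ℂ) * Complex.I) ^ 2 = ((-y ^ 2 : ℝ) : ℂ) := by
    rw [mul_pow, Complex.I_sq]; push_cast; ring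
  obtain ⟨r, hr⟩ : ∃ r : ℝ, cerf (y * Complex.I) = y * Complex.I * r := by
    refine ⟨2 / Real.sqrt π * ∫ t in (0 : ℝ)..1, Real.exp (y ^ 2 * t ^ 2), ?_⟩
    rw [cerf, intervalIntegral.integral_const_mul, Complex.ofReal_mul,
      ← intervalIntegral.integral_ofReal, hsq]
    push_cast
    rw [neg_neg]
    ring
  have hform : F0 (y * Complex.I) = ((1 / Real.sqrt π - Real.exp (-y ^ 2) * y ^ 2 * r : ℝ) : ℂ)
      + ((Real.exp (-y ^ 2) * y : ℝ) : ℂ) * Complex.I := by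
    rw [F0, hr, hsq]
    push_cast
    linear_combination (Complex.exp (-(y : ℂ) ^ 2) * y ^ 2 * r) * Complex.I_sq
  rw [hform] at hF
  have him := congrArg Complex.im hF
  have hre := congrArg Complex.re hF
  simp only [Complex.add_im, Complex.add_re, Complex.ofReal_im, Complex.ofReal_re,
    Complex.re_ofReal_mul, Complex.im_ofReal_mul, Complex.I_re, Complex.I_im, Complex.zero_im,
    Complex.zero_re, mul_one, mul_zero, zero_add, add_zero] at him hre
  have hy : y = 0 := (mul_eq_zero.mp him).resolve_left (Real.exp_pos _).ne'
  subst hy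
  simp at hre
  exact (Real.sqrt_pos.mpr Real.pi_pos).ne' hre

lemma F0_ofReal_ne_zero {x : ℝ} (hx : 0 < x) : F0 x ≠ 0 := by
  have hc : ∃ r : ℝ, 0 ≤ r ∧ cerf x = r := by
    refine ⟨2 / Real.sqrt π * ∫ t in (0 : ℝ)..1, x * Real.exp (-x ^ 2 * t ^ 2), ?_, ?_⟩
    · refine mul_nonneg (by positivity)
        (intervalIntegral.integral_nonneg zero_le_one fun t _ => by positivity)
    · rw [cerf, Complex.ofReal_mul, ← intervalIntegral.integral_ofReal]
      simp
  obtain ⟨r, hr, hc⟩ := hc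
  have h : F0 x = ((Real.exp (x ^ 2) * x * (1 + r) + 1 / Real.sqrt π : ℝ) : ℂ) := by
    rw [F0, hc]; push_cast; rfl
  rw [h]
  have : 0 < Real.exp (x ^ 2) * x * (1 + r) + 1 / Real.sqrt π := by positivity
  exact_mod_cast this.ne'

theorem stmt14 (ζ : ℂ) (hζ : F0 ζ = 0) :
    0 < ζ.re ∧ ζ.im ≠ 0 ∧
    HasDerivAt F0 (-1 / (((Real.sqrt π : ℝ) : ℂ) * ζ)) ζ ∧
    (-1 / (((Real.sqrt π : ℝ) : ℂ) * ζ) : ℂ) ≠ 0 := by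
  have hre : 0 < ζ.re := by
    rcases lt_trichotomy ζ.re 0 with h | h | h
    · refine absurd ?_ (F0_neg_ne_zero (u := -ζ) (by simpa using h))
      rwa [neg_neg]
    · exact absurd hζ (F0_ne_zero_of_re_eq_zero h)
    · exact h
  have hζ0 : ζ ≠ 0 := by
    rintro rfl
    simp at hre
  have hne := sqrt_pi_ne_zero
  refine ⟨hre, fun him => ?_, ?_, div_ne_zero (by simp) (mul_ne_zero hne hζ0)⟩
  · have hx : ζ = (ζ.re : ℂ) := Complex.ext rfl (by simpa using him)
    rw [hx] at hζ
    exact F0_ofReal_ne_zero hre hζ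
  · have h1 : HasDerivAt (fun z : ℂ => Complex.exp (z ^ 2)) (Complex.exp (ζ ^ 2) * (2 * ζ)) ζ := by
      simpa using (hasDerivAt_pow 2 ζ).cexp
    have h2 := ((h1.mul (hasDerivAt_id ζ)).mul ((hasDerivAt_cerf ζ).const_add 1)).add_const
      ((1 / Real.sqrt π : ℝ) : ℂ)
    have hexp : Complex.exp (ζ ^ 2) * Complex.exp (-ζ ^ 2) = 1 := by
      rw [← Complex.exp_add]; simp
    refine HasDerivAt.congr_deriv h2 ?_
    simp only [id, Pi.mul_apply]
    rw [F0] at hζ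
    push_cast at hζ ⊢
    -- The derivative is `(2ζ² + 1) e^{ζ²} (1 + erf ζ) + 2ζ/√π`, and `e^{ζ²} (1 + erf ζ) = −1/(√π ζ)` at a zero.
    set E := Complex.exp (ζ ^ 2)
    set E' := Complex.exp (-ζ ^ 2)
    set c := cerf ζ
    set s := ((Real.sqrt π : ℝ) : ℂ)
    field_simp at hζ ⊢
    linear_combination (2 * ζ ^ 2 + 1) * hζ + 2 * ζ ^ 2 * hexp
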